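/- Lax representation in cartesian coordinates. Let H = 4·p_x·p_y and for λ ∈ ℝ define the 2×2 matrices L(λ) = [[p_x + (2λ − x)p_y, λ² − λx + (x² − 2y)/4], [−4p_y², −(p_x + (2λ − x)p_y)]] and A = [[0,1],[0,0]]. Then for every λ and every matrix entry (i,j), {H, L(λ)_{ij}} = ([A, L(λ)])_{ij}, where [A,L] = A·L − L·A. -/

import Mathlib

/-- The canonical Poisson bracket of two functions of `(x, y, pₓ, p_y)` on `ℝ⁴`:
`{F,G} = ∂F/∂pₓ·∂G/∂x − ∂F/∂x·∂G/∂pₓ + ∂F/∂p_y·∂G/∂y − ∂F/∂y·∂G/∂p_y`. -/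
noncomputable def pb (F G : ℝ → ℝ → ℝ → ℝ → ℝ) (x y px py : ℝ) : ℝ :=
    deriv (fun s => F x y s py) px * deriv (fun s => G s y px py) x
  - deriv (fun s => F s y px py) x * deriv (fun s => G x y s py) px
  + deriv (fun s => F x y px s) py * deriv (fun s => G x s px py) y
  - deriv (fun s => F x s px py) y * deriv (fun s => G x y px s) py

/-- The Lax matrix of the free Stäckel system separable in cartesian
coordinates, with spectral parameter `lam`. -/
noncomputable def L (lam x y px py : ℝ) : Matrix (Fin 2) (Fin 2) ℝ :=
  !![px + (2 * lam - x) * py, lam ^ 2 - lam * x + (x ^ 2 - 2 * y) / 4;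
     -(4 * py ^ 2), -(px + (2 * lam - x) * py)]

/-- The second Lax matrix. -/
noncomputable def A : Matrix (Fin 2) (Fin 2) ℝ := !![0, 1; 0, 0]

/-- The free Hamiltonian `H = 4pₓp_y` in cartesian coordinates. -/
noncomputable def Ham : ℝ → ℝ → ℝ → ℝ → ℝ := fun _ _ px py => 4 * px * py

/-!
Write `D = {H, ·}`. The matrix `L(λ)` is determined by its upper right entry `u`: it equals
`[[-Du/2, u], [-D²u/2, Du/2]]`. Its commutator with `A` is `[[-D²u/2, Du], [0, D²u/2]]`, which is
`DL` as soon as `D³u = 0`. Along the free flow `Du = -2 (pₓ + (2λ - x) p_y)` and `D²u = 8 p_y²`,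
and the momenta are conserved.
-/

theorem pb_const_mul_right (F G : ℝ → ℝ → ℝ → ℝ → ℝ) (c x y px py : ℝ) :
    pb F (fun x y px py => c * G x y px py) x y px py = c * pb F G x y px py := by
  simp only [pb, deriv_const_mul_field]
  ring

theorem A_mul_sub_mul_A (M : Matrix (Fin 2) (Fin 2) ℝ) :
    A * M - M * A = !![M 1 0, M 1 1 - M 0 0; 0, -M 1 0] := by
  ext i j
  fin_cases i <;> fin_cases j <;> simp [A, Matrix.mul_apply, Matrix.vecMul, dotProduct]

/-- The Lax matrix, paired with `A`, generated by a function `u` under the flow of `H`. The entries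
other than `u` are those forced by the Lax equation and tracelessness. -/
noncomputable def laxMatrix (H u : ℝ → ℝ → ℝ → ℝ → ℝ) (x y px py : ℝ) :
    Matrix (Fin 2) (Fin 2) ℝ :=
  !![-1 / 2 * pb H u x y px py, u x y px py;
     -1 / 2 * pb H (pb H u) x y px py, 1 / 2 * pb H u x y px py]

theorem pb_laxMatrix {H u : ℝ → ℝ → ℝ → ℝ → ℝ} (hu : pb H (pb H (pb H u)) = 0)
    (x y px py : ℝ) (i j : Fin 2) :
    pb H (fun x y px py => laxMatrix H u x y px py i j) x y px py =
      (A * laxMatrix H u x y px py - laxMatrix H u x y px py * A) i j := by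
  rw [A_mul_sub_mul_A]
  fin_cases i <;> fin_cases j
  · exact pb_const_mul_right H (pb H u) (-1 / 2) x y px py
  · change pb H u x y px py = 1 / 2 * pb H u x y px py - -1 / 2 * pb H u x y px py
    ring
  · change pb H (fun x y px py => -1 / 2 * pb H (pb H u) x y px py) x y px py = 0
    simp [pb_const_mul_right, hu]
  · change pb H (fun x y px py => 1 / 2 * pb H u x y px py) x y px py =
      -(-1 / 2 * pb H (pb H u) x y px py)
    rw [pb_const_mul_right]
    ring

theorem pb_Ham (G : ℝ → ℝ → ℝ → ℝ → ℝ) (x y px py : ℝ) :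
    pb Ham G x y px py =
      4 * py * deriv (fun s => G s y px py) x + 4 * px * deriv (fun s => G x s px py) y := by
  simp [pb, Ham]

/-- The upper right entry `u` of `L(λ)`: the monic polynomial in `λ` whose roots are the separation
coordinates `λ₁`, `λ₂`, where `x = λ₁ + λ₂` and `2y = (λ₁ - λ₂)²`. -/
noncomputable def separationPoly (lam x y _px _py : ℝ) : ℝ :=
  lam ^ 2 - lam * x + (x ^ 2 - 2 * y) / 4

theorem pb_Ham_separationPoly (lam : ℝ) :
    pb Ham (separationPoly lam) = fun x _ px py => -2 * (px + (2 * lam - x) * py) := by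
  funext x y px py
  have hx : HasDerivAt (fun s => separationPoly lam s y px py) (-lam + x / 2) x := by
    refine ((((hasDerivAt_id' x).const_mul lam).const_sub (lam ^ 2)).add
      ((((hasDerivAt_id' x).pow 2).sub_const (2 * y)).div_const 4)).congr_deriv ?_
    push_cast
    ring
  have hy : HasDerivAt (fun s => separationPoly lam x s px py) (-1 / 2) y := by
    refine (((((hasDerivAt_id' y).const_mul 2).const_sub (x ^ 2)).div_const 4).const_add
      (lam ^ 2 - lam * x)).congr_deriv ?_
    norm_num
  rw [pb_Ham, hx.deriv, hy.deriv]
  ring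

theorem pb_Ham_pb_Ham_separationPoly (lam : ℝ) :
    pb Ham (pb Ham (separationPoly lam)) = fun _ _ _ py => 8 * py ^ 2 := by
  funext x y px py
  rw [pb_Ham_separationPoly, pb_Ham]
  have hx : HasDerivAt (fun s => -2 * (px + (2 * lam - s) * py)) (2 * py) x := by
    refine (((((hasDerivAt_id' x).const_sub (2 * lam)).mul_const py).const_add px).const_mul
      (-2)).congr_deriv ?_
    ring
  rw [hx.deriv, deriv_const]
  ring

theorem pb_Ham_pb_Ham_pb_Ham_separationPoly (lam : ℝ) :
    pb Ham (pb Ham (pb Ham (separationPoly lam))) = 0 := by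
  funext x y px py
  simp [pb_Ham_pb_Ham_separationPoly, pb_Ham]

theorem L_eq_laxMatrix (lam : ℝ) : L lam = laxMatrix Ham (separationPoly lam) := by
  funext x y px py
  rw [L, laxMatrix, pb_Ham_pb_Ham_separationPoly, pb_Ham_separationPoly, separationPoly]
  have h₀₀ : px + (2 * lam - x) * py = -1 / 2 * (-2 * (px + (2 * lam - x) * py)) := by ring
  have h₁₀ : -(4 * py ^ 2) = -1 / 2 * (8 * py ^ 2) := by ring
  have h₁₁ : -(px + (2 * lam - x) * py) = 1 / 2 * (-2 * (px + (2 * lam - x) * py)) := by ring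
  rw [← h₀₀, ← h₁₀, ← h₁₁]

/-- Lax representation in cartesian coordinates: the Lax equation
`{H, L(λ)} = [A, L(λ)]` holds entrywise. -/
theorem lax_cartesian :
    ∀ (lam x y px py : ℝ) (i j : Fin 2),
      pb Ham (fun x y px py => L lam x y px py i j) x y px py =
        (A * L lam x y px py - L lam x y px py * A) i j := by
  intro lam x y px py i j
  rw [L_eq_laxMatrix]
  exact pb_laxMatrix (pb_Ham_pb_Ham_pb_Ham_separationPoly lam) x y px py i j
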